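/- Fix integers m ≥ k+1 ≥ 2, reals c > 0 and α ≥ 1, an integer T ≥ 1, and let f be an (m,c,k)-good function for (𝒞,𝒳). Let h ∈ 𝒞 and let S be a finite set of labeled examples labeled by h with |S| ≤ T. Call (x,y) ∈ S attackable if there exists a set A of labeled examples labeled by h with A ⊇ S∖{(x,y)} and |A| ≤ T such that both (x,+1) and (x,−1) are realizable in 𝒱(A) and ρ_f(A) − ρ_f(A ∪ {(x,−y)}) < α. Then the number of attackable elements of S is at most e·m·(α + c·C(T, k−1))^{1/k}, where C(n,r) is the binomial coefficient and e is Euler's number. -/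

import Mathlib

/-! Basic notions for learning with a concept class `C ⊆ {+1,−1}^𝒳`.  Labeled examples are
pairs in `𝒳 × ℤ` (with labels `±1`). -/

variable {X : Type*}

/-- `h` is consistent with a set of labeled examples. -/
def Consistent (h : X → ℤ) (S : Set (X × ℤ)) : Prop := ∀ p ∈ S, h p.1 = p.2

/-- The version space `𝒱(S)` of hypotheses in `C` consistent with `S`. -/
def VSpace (C : Set (X → ℤ)) (S : Set (X × ℤ)) : Set (X → ℤ) := {h ∈ C | Consistent h S}

/-- The restriction `V_{x→y}`. -/
def Restrict (V : Set (X → ℤ)) (x : X) (y : ℤ) : Set (X → ℤ) := {h ∈ V | h x = y}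

/-- A labeled example `(x,y)` is realizable in `V` if `V_{x→y} ≠ ∅`. -/
def RealizableIn (V : Set (X → ℤ)) (x : X) (y : ℤ) : Prop := (Restrict V x y).Nonempty

/-- `V` is a version space for `C`. -/
def IsVersionSpace (C : Set (X → ℤ)) (V : Set (X → ℤ)) : Prop :=
  ∃ S : Set (X × ℤ), V = VSpace C S

/-- Monotonicity of a score function `f` on size-`k` labeled sets: restricting a version
space consistent with `U` by a labeled example jointly realizable with `U` can only
decrease the score. -/
def MonotoneScore (C : Set (X → ℤ)) (k : ℕ) (f : Finset (X × ℤ) → Set (X → ℤ) → ℝ) : Prop :=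
  ∀ U : Finset (X × ℤ), U.card = k → ∀ V : Set (X → ℤ), IsVersionSpace C V →
    (∃ h ∈ V, Consistent h ↑U) →
    ∀ x : X, ∀ y : ℤ, (∃ h ∈ V, Consistent h (insert (x, y) (↑U : Set (X × ℤ)))) →
      f U (Restrict V x y) ≤ f U V

/-- `m`-robustness of a score function `f`: in every size-`m` set `M` labeled by some
`h ∈ C` there are a size-`k` subset `U ⊆ M` and a witness `p ∈ M ∖ U` such that for every
set `A` of labeled examples labeled by `h` with `A ⊇ M ∖ (U ∪ {p})`, flipping the label of
the witness either drops the score of `U` by at least `1`, or makes `U` unrealizable. -/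
def RobustScore [DecidableEq X] (C : Set (X → ℤ)) (m k : ℕ)
    (f : Finset (X × ℤ) → Set (X → ℤ) → ℝ) : Prop :=
  ∀ h ∈ C, ∀ M : Finset (X × ℤ), M.card = m → Consistent h ↑M →
    ∃ U ⊆ M, U.card = k ∧ ∃ p ∈ M, p ∉ U ∧
      ∀ A : Set (X × ℤ), Consistent h A → ↑(M \ insert p U) ⊆ A →
        (1 ≤ f U (VSpace C A) - f U (Restrict (VSpace C A) p.1 (-p.2)) ∨
          ¬ ∃ h' ∈ Restrict (VSpace C A) p.1 (-p.2), Consistent h' ↑U)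

/-- `f` is an `(m,c,k)`-good function for `(C, 𝒳)`: it maps size-`k` labeled sets and
version spaces into `[0, c]`, is monotone, and is `m`-robust. -/
def IsGood [DecidableEq X] (C : Set (X → ℤ)) (m : ℕ) (c : ℝ) (k : ℕ)
    (f : Finset (X × ℤ) → Set (X → ℤ) → ℝ) : Prop :=
  (∀ U : Finset (X × ℤ), U.card = k → ∀ V : Set (X → ℤ), 0 ≤ f U V ∧ f U V ≤ c) ∧
  MonotoneScore C k f ∧ RobustScore C m k f

/-- The leave-`k`-out potential `ρ_f(S) = Σ_{U ⊆ S, |U| = k} f(U; 𝒱(S ∖ U))`. -/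
def pot [DecidableEq X] (C : Set (X → ℤ)) (k : ℕ)
    (f : Finset (X × ℤ) → Set (X → ℤ) → ℝ) (S : Finset (X × ℤ)) : ℝ :=
  ∑ U ∈ S.powersetCard k, f U (VSpace C ↑(S \ U))

/-! Call a `k`-set `U ⊆ A` *dropped* by a flipped example `(x, -y)` if learning `(x, -y)` lowers
`f(U; 𝒱(A ∖ U))` by at least `1`. Adding `(x, -y)` to `A` never raises the summands already present
in the potential and creates at most `C(T, k-1)` new ones, each at most `c`; so an attackable
example has at most `D = α + c·C(T, k-1)` dropped sets. By robustness every `m` attackable examples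
contain an example together with one of its dropped sets. The resulting `(k+1)`-sets therefore form
a Turán system on the `n` attackable examples with at most `D n` edges, and such a system forces
`n ≤ e·m·D^{1/k}`: for `k ≥ 2` by deleting a vertex from every edge inside a random set of density
`1 / (2 D^{1/k})`, and for `k = 1` by Turán's theorem, which gives `n ≤ m (2 D + 1)`. The latter
needs `D` to exceed `1`; in fact `D ≥ 2` as soon as a dropped set exists, because then `c ≥ 1`. -/

section RandomSubset

open Finset

variable {ι : Type*}

theorem sum_Icc_pow_card_mul_pow_sub_card {R : Type*} [CommSemiring R] [DecidableEq ι]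
    {Z B : Finset ι} (hZ : Z ⊆ B) (a b : R) :
    ∑ W ∈ Icc Z B, a ^ #W * b ^ (#B - #W) = a ^ #Z * (a + b) ^ (#B - #Z) := by
  have hdisj : ∀ V ∈ (B \ Z).powerset, Disjoint Z V := fun V hV ↦
    disjoint_sdiff.mono_right (mem_powerset.1 hV)
  have hinj : Set.InjOn (Z ∪ ·) ((B \ Z).powerset : Set (Finset ι)) := fun V hV W hW hVW ↦ by
    rw [← union_sdiff_cancel_left (hdisj V hV), ← union_sdiff_cancel_left (hdisj W hW)]
    exact congrArg (· \ Z) hVW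
  rw [Icc_eq_image_powerset hZ, sum_image hinj, ← card_sdiff_of_subset hZ,
    ← sum_pow_mul_eq_add_pow, mul_sum]
  refine sum_congr rfl fun V hV ↦ ?_
  rw [card_union_of_disjoint (hdisj V hV), card_sdiff_of_subset hZ, pow_add, mul_assoc,
    Nat.sub_add_eq]

/-- The probability that the random subset of `B` that contains each element independently with
probability `q` is equal to `R`. -/
def binomialWeight (B : Finset ι) (q : ℝ) (R : Finset ι) : ℝ :=
  q ^ #R * (1 - q) ^ (#B - #R)

theorem binomialWeight_nonneg (B : Finset ι) {q : ℝ} (hq₀ : 0 ≤ q) (hq₁ : q ≤ 1) (R : Finset ι) :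
    0 ≤ binomialWeight B q R :=
  mul_nonneg (pow_nonneg hq₀ _) (pow_nonneg (sub_nonneg.2 hq₁) _)

theorem sum_binomialWeight (B : Finset ι) (q : ℝ) : ∑ R ∈ B.powerset, binomialWeight B q R = 1 := by
  simp [binomialWeight, sum_pow_mul_eq_add_pow]

theorem sum_binomialWeight_mul_card_filter_subset [DecidableEq ι] {B : Finset ι}
    {F : Finset (Finset ι)} {r : ℕ} (hF : F ⊆ B.powersetCard r) (q : ℝ) :
    ∑ R ∈ B.powerset, binomialWeight B q R * #{e ∈ F | e ⊆ R} = #F * q ^ r := by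
  have prob_superset : ∀ e ∈ F, ∑ R ∈ B.powerset with e ⊆ R, binomialWeight B q R = q ^ r := by
    intro e he
    obtain ⟨heB, hcard⟩ := mem_powersetCard.1 (hF he)
    have hIcc : {R ∈ B.powerset | e ⊆ R} = Icc e B := by
      ext R
      simp [and_comm]
    simp only [hIcc, binomialWeight]
    rw [sum_Icc_pow_card_mul_pow_sub_card heB, hcard]
    simp
  calc ∑ R ∈ B.powerset, binomialWeight B q R * #{e ∈ F | e ⊆ R}
      = ∑ R ∈ B.powerset, ∑ e ∈ F, if e ⊆ R then binomialWeight B q R else 0 := by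
        simp [← sum_filter, mul_comm]
    _ = ∑ e ∈ F, ∑ R ∈ B.powerset with e ⊆ R, binomialWeight B q R := by
        simp only [sum_filter]
        exact sum_comm
    _ = #F * q ^ r := by rw [sum_congr rfl prob_superset, sum_const, nsmul_eq_mul]

end RandomSubset

section Turan

open Finset

theorem two_mul_card_edgeFinset_add_sq_le_of_cliqueFree {V : Type*} [Fintype V]
    {G : SimpleGraph V} [DecidableRel G.Adj] {r : ℕ} (hG : G.CliqueFree (r + 1)) :
    2 * r * #G.edgeFinset + Fintype.card V ^ 2 ≤ r * Fintype.card V ^ 2 := by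
  classical
  rcases r with _ | r
  · rw [zero_add, SimpleGraph.cliqueFree_one, ← Fintype.card_eq_zero_iff] at hG
    simp [hG]
  obtain ⟨H, _, hH⟩ := SimpleGraph.exists_isTuranMaximal (V := V) r.succ_pos
  obtain ⟨iso⟩ := hH.nonempty_iso_turanGraph
  calc 2 * (r + 1) * #G.edgeFinset + Fintype.card V ^ 2
      ≤ 2 * (r + 1) * #(SimpleGraph.turanGraph (Fintype.card V) (r + 1)).edgeFinset
          + Fintype.card V ^ 2 := by
        gcongr
        exact iso.card_edgeFinset_eq ▸ hH.2 hG
    _ ≤ r * Fintype.card V ^ 2 + Fintype.card V ^ 2 := by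
        exact Nat.add_le_add_right SimpleGraph.mul_card_edgeFinset_turanGraph_le _
    _ = (r + 1) * Fintype.card V ^ 2 := by ring

/-- A Turán system: an `r`-uniform hypergraph `F` on the vertex set `B` such that every `m`-subset
of `B` contains an edge. -/
structure IsTuranSystem {ι : Type*} (B : Finset ι) (F : Finset (Finset ι)) (m r : ℕ) : Prop where
  subset_powersetCard : F ⊆ B.powersetCard r
  exists_subset : ∀ M ⊆ B, #M = m → ∃ e ∈ F, e ⊆ M

/-- The graph on `B` whose edges are the pairs outside `F`; Turán's theorem applies to it because
its cliques are the sets without an edge of `F`. -/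
def complGraph {ι : Type*} [DecidableEq ι] (B : Finset ι) (F : Finset (Finset ι)) :
    SimpleGraph B where
  Adj u v := u ≠ v ∧ {u.1, v.1} ∉ F
  symm := ⟨fun u v huv ↦ ⟨huv.1.symm, pair_comm u.1 v.1 ▸ huv.2⟩⟩
  loopless := ⟨fun _ h ↦ h.1 rfl⟩

theorem choose_two_le_card_edgeFinset_complGraph_add {ι : Type*} [DecidableEq ι]
    (B : Finset ι) (F : Finset (Finset ι)) [DecidableRel (complGraph B F).Adj] :
    (#B).choose 2 ≤ #(complGraph B F).edgeFinset + #F := by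
  have hcover : B.powersetCard 2 ⊆
      (complGraph B F).edgeFinset.image (fun e ↦ (e.map Subtype.val).toFinset) ∪ F := by
    intro e he
    obtain ⟨heB, hcard⟩ := mem_powersetCard.1 he
    obtain ⟨u, v, huv, rfl⟩ := card_eq_two.1 hcard
    by_cases heF : {u, v} ∈ F
    · exact mem_union_right _ heF
    · have hu : u ∈ B := heB (by simp)
      have hv : v ∈ B := heB (by simp)
      have hadj : (complGraph B F).Adj ⟨u, hu⟩ ⟨v, hv⟩ := ⟨by simpa using huv, heF⟩
      exact mem_union_left _ (mem_image.2
        ⟨s(⟨u, hu⟩, ⟨v, hv⟩), SimpleGraph.mem_edgeFinset.2 hadj, Sym2.toFinset_mk_eq⟩)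
  rw [← card_powersetCard]
  grw [hcover, card_union_le, card_image_le]

namespace IsTuranSystem

variable {ι : Type*} {B : Finset ι} {F : Finset (Finset ι)} {m r : ℕ}

theorem card_le_add_card_filter_subset [DecidableEq ι] (hF : IsTuranSystem B F m r) (hr : r ≠ 0)
    {R : Finset ι} (hR : R ⊆ B) : #R ≤ m + #{e ∈ F | e ⊆ R} := by
  have hne : ∀ e ∈ F, e.Nonempty := fun e he ↦
    card_ne_zero.1 ((mem_powersetCard.1 (hF.subset_powersetCard he)).2 ▸ hr)
  obtain rfl | ⟨x, _⟩ := R.eq_empty_or_nonempty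
  · simp
  have : Nonempty ι := ⟨x⟩
  choose! v hv using hne
  set deleted := {e ∈ F | e ⊆ R}.image v
  have card_remaining : #(R \ deleted) ≤ m := by
    by_contra! hlt
    obtain ⟨M, hM, hMcard⟩ := exists_subset_card_eq hlt.le
    obtain ⟨e, he, heM⟩ := hF.exists_subset M ((hM.trans sdiff_subset).trans hR) hMcard
    have heR : e ⊆ R := (heM.trans hM).trans sdiff_subset
    exact (mem_sdiff.1 (hM (heM (hv e he)))).2
      (mem_image_of_mem v (mem_filter.2 ⟨he, heR⟩))
  calc #R ≤ #(R \ deleted) + #deleted := card_le_card_sdiff_add_card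
    _ ≤ m + #{e ∈ F | e ⊆ R} := add_le_add card_remaining card_image_le

theorem card_mul_le (hF : IsTuranSystem B F m r) (hr : r ≠ 0) {q : ℝ} (hq₀ : 0 ≤ q)
    (hq₁ : q ≤ 1) : #B * q ≤ m + #F * q ^ r := by
  classical
  have card_eq : ∀ R ∈ B.powerset, #R = #{e ∈ B.powersetCard 1 | e ⊆ R} := by
    intro R hR
    have : {e ∈ B.powersetCard 1 | e ⊆ R} = R.powersetCard 1 := by
      ext e
      simp only [mem_filter, mem_powersetCard]
      exact ⟨fun h ↦ ⟨h.2, h.1.2⟩, fun h ↦ ⟨⟨h.1.trans (mem_powerset.1 hR), h.2⟩, h.1⟩⟩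
    rw [this, card_powersetCard, Nat.choose_one_right]
  calc (#B * q : ℝ)
      = ∑ R ∈ B.powerset, binomialWeight B q R * #R := by
        rw [sum_congr rfl fun R hR ↦ by rw [card_eq R hR],
          sum_binomialWeight_mul_card_filter_subset subset_rfl, card_powersetCard,
          Nat.choose_one_right, pow_one]
    _ ≤ ∑ R ∈ B.powerset, binomialWeight B q R * (m + #{e ∈ F | e ⊆ R}) :=
        sum_le_sum fun R hR ↦ mul_le_mul_of_nonneg_left
          (mod_cast hF.card_le_add_card_filter_subset hr (mem_powerset.1 hR))
          (binomialWeight_nonneg B hq₀ hq₁ R)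
    _ = m + #F * q ^ r := by
        simp only [mul_add, sum_add_distrib]
        rw [← sum_mul, sum_binomialWeight, one_mul,
          sum_binomialWeight_mul_card_filter_subset hF.subset_powersetCard]

theorem card_le_mul_rpow_of_two_le {k : ℕ} (hF : IsTuranSystem B F m (k + 1)) (hk : 2 ≤ k)
    {D : ℝ} (hD : 1 ≤ D) (hcard : #F ≤ D * #B) :
    (#B : ℝ) ≤ 8 / 3 * m * D ^ ((1 : ℝ) / k) := by
  set s := D ^ ((1 : ℝ) / k) with hs
  have hs₁ : 1 ≤ s := Real.one_le_rpow hD (by positivity)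
  have hsk : s ^ k = D := by
    rw [hs, one_div, Real.rpow_inv_natCast_pow (by linarith) (by omega)]
  have hDq : D * (1 / (2 * s)) ^ k ≤ 1 / 4 := calc
    D * (1 / (2 * s)) ^ k = (1 / 2) ^ k := by
      rw [← hsk, ← mul_pow]
      congr 1
      field_simp
    _ ≤ (1 / 2 : ℝ) ^ 2 := pow_le_pow_of_le_one (by norm_num) (by norm_num) hk
    _ = 1 / 4 := by norm_num
  have hq₁ : 1 / (2 * s) ≤ 1 := (div_le_one (by linarith)).2 (by linarith)
  have hdel : #B * (1 / (2 * s)) ≤ m + 1 / 4 * (#B * (1 / (2 * s))) := calc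
    #B * (1 / (2 * s)) ≤ m + #F * (1 / (2 * s)) ^ (k + 1) :=
      hF.card_mul_le (by omega) (by positivity) hq₁
    _ ≤ m + D * #B * (1 / (2 * s)) ^ (k + 1) := by gcongr
    _ = m + D * (1 / (2 * s)) ^ k * (#B * (1 / (2 * s))) := by ring
    _ ≤ m + 1 / 4 * (#B * (1 / (2 * s))) := by gcongr
  calc (#B : ℝ) = 8 / 3 * (3 / 4 * (#B * (1 / (2 * s)))) * s := by field_simp; ring
    _ ≤ 8 / 3 * m * s := by gcongr; linarith

theorem cliqueFree_complGraph [DecidableEq ι] (hF : IsTuranSystem B F m 2) :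
    (complGraph B F).CliqueFree m := by
  intro s hs
  obtain ⟨e, he, hes⟩ := hF.exists_subset (s.map (.subtype _)) (map_subtype_subset s)
    ((card_map _).trans hs.card_eq)
  obtain ⟨u, v, huv, rfl⟩ := card_eq_two.1 (mem_powersetCard.1 (hF.subset_powersetCard he)).2
  obtain ⟨hu, hv⟩ : (∃ hu : u ∈ B, ⟨u, hu⟩ ∈ s) ∧ ∃ hv : v ∈ B, ⟨v, hv⟩ ∈ s := by
    simpa [insert_subset_iff] using hes
  exact (hs.isClique hu.2 hv.2 (by simpa using huv)).2 he

theorem card_sq_le (hF : IsTuranSystem B F (m + 1) 2) : #B ^ 2 ≤ m * (#B + 2 * #F) := by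
  classical
  have hturan := two_mul_card_edgeFinset_add_sq_le_of_cliqueFree hF.cliqueFree_complGraph
  rw [Fintype.card_coe] at hturan
  have hpairs : #B ^ 2 = 2 * (#B).choose 2 + #B := by
    rw [Nat.choose_two_right, Nat.two_mul_div_two_of_even (Nat.even_mul_pred_self _)]
    cases #B with
    | zero => rfl
    | succ n => rw [Nat.add_sub_cancel]; ring
  have hcover := Nat.mul_le_mul_left (2 * m) (choose_two_le_card_edgeFinset_complGraph_add B F)
  linarith [congrArg (m * ·) hpairs]

theorem pos (hF : IsTuranSystem B F m r) (hr : r ≠ 0) : 0 < m := by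
  by_contra! hm
  obtain rfl := Nat.le_zero.1 hm
  obtain ⟨e, he, he₀⟩ := hF.exists_subset ∅ (empty_subset _) card_empty
  have hcard := (mem_powersetCard.1 (hF.subset_powersetCard he)).2
  rw [subset_empty.1 he₀, card_empty] at hcard
  exact hr hcard.symm

theorem card_le_mul_of_pairs (hF : IsTuranSystem B F m 2) {D : ℝ} (hD : 0 ≤ D)
    (hcard : #F ≤ D * #B) : (#B : ℝ) ≤ m * (2 * D + 1) := by
  obtain ⟨m, rfl⟩ := Nat.exists_eq_add_of_le' (hF.pos two_ne_zero)
  rcases (#B).eq_zero_or_pos with hB | hB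
  · rw [hB, Nat.cast_zero]
    positivity
  have hB' : (0 : ℝ) < #B := mod_cast hB
  refine le_of_mul_le_mul_right ?_ hB'
  calc (#B * #B : ℝ) ≤ m * (#B + 2 * #F) := mod_cast sq #B ▸ hF.card_sq_le
    _ ≤ (m + 1 : ℕ) * (#B + 2 * (D * #B)) := by
        gcongr
        exact m.le_succ
    _ = (m + 1 : ℕ) * (2 * D + 1) * #B := by ring

theorem card_le_mul_rpow {k : ℕ} (hF : IsTuranSystem B F m (k + 1)) (hk : 1 ≤ k)
    {D : ℝ} (hD : 2 ≤ D) (hcard : #F ≤ D * #B) :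
    (#B : ℝ) ≤ Real.exp 1 * m * D ^ ((1 : ℝ) / k) := by
  have he := Real.exp_one_gt_d9
  rcases hk.eq_or_lt with rfl | hk
  · calc (#B : ℝ) ≤ m * (2 * D + 1) := hF.card_le_mul_of_pairs (by linarith) hcard
      _ ≤ m * (Real.exp 1 * D) := by
          gcongr
          nlinarith
      _ = Real.exp 1 * m * D ^ ((1 : ℝ) / (1 : ℕ)) := by
          rw [Nat.cast_one, div_one, Real.rpow_one]
          ring
  · calc (#B : ℝ) ≤ 8 / 3 * m * D ^ ((1 : ℝ) / k) :=
          hF.card_le_mul_rpow_of_two_le hk (by linarith) hcard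
      _ ≤ Real.exp 1 * m * D ^ ((1 : ℝ) / k) := by
          gcongr
          linarith

end IsTuranSystem

/-- The hypergraph of all `k + 1`-subsets of `B` of the form `insert p U` with `p ∉ U` and
`U ∈ E p`. -/
def rootedEdges {ι : Type*} [DecidableEq ι] (B : Finset ι) (E : ι → Finset (Finset ι)) (k : ℕ) :
    Finset (Finset ι) :=
  {e ∈ B.powersetCard (k + 1) | ∃ p ∈ e, e.erase p ∈ E p}

section RootedEdges

variable {ι : Type*} [DecidableEq ι] {B : Finset ι} {E : ι → Finset (Finset ι)} {k m : ℕ}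

theorem isTuranSystem_rootedEdges
    (h : ∀ M ⊆ B, #M = m → ∃ p ∈ M, ∃ U ∈ E p, #U = k ∧ U ⊆ M.erase p) :
    IsTuranSystem B (rootedEdges B E k) m (k + 1) where
  subset_powersetCard := filter_subset _ _
  exists_subset M hMB hM := by
    obtain ⟨p, hpM, U, hU, hcard, hUM⟩ := h M hMB hM
    have hpU : p ∉ U := fun hp ↦ notMem_erase p M (hUM hp)
    have hsub : insert p U ⊆ M := insert_subset hpM (hUM.trans (erase_subset _ _))
    refine ⟨insert p U, mem_filter.2 ⟨mem_powersetCard.2 ⟨hsub.trans hMB, ?_⟩, ?_⟩, hsub⟩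
    · rw [card_insert_of_notMem hpU, hcard]
    · exact ⟨p, mem_insert_self p U, by rwa [erase_insert hpU]⟩

theorem card_rootedEdges_le_sum (B : Finset ι) (E : ι → Finset (Finset ι)) (k : ℕ) :
    #(rootedEdges B E k) ≤ ∑ p ∈ B, #(E p) := by
  have hcover : rootedEdges B E k ⊆ B.biUnion fun p ↦ (E p).image (insert p) := by
    intro e he
    obtain ⟨heB, p, hp, hE⟩ := mem_filter.1 he
    exact mem_biUnion.2 ⟨p, (mem_powersetCard.1 heB).1 hp,
      mem_image.2 ⟨e.erase p, hE, insert_erase hp⟩⟩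
  exact (card_le_card hcover).trans (card_biUnion_le.trans (sum_le_sum fun p _ ↦ card_image_le))

theorem card_le_mul_rpow_of_rooted (hk : 1 ≤ k) {D : ℝ} (hD : 1 ≤ D)
    (hE : ∀ p ∈ B, #(E p) ≤ D) (hD₂ : ∀ p ∈ B, (E p).Nonempty → 2 ≤ D)
    (h : ∀ M ⊆ B, #M = m → ∃ p ∈ M, ∃ U ∈ E p, #U = k ∧ U ⊆ M.erase p) :
    (#B : ℝ) ≤ Real.exp 1 * m * D ^ ((1 : ℝ) / k) := by
  rcases lt_or_ge #B m with hlt | hle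
  · calc (#B : ℝ) ≤ 1 * m * 1 := by simpa using hlt.le
      _ ≤ Real.exp 1 * m * D ^ ((1 : ℝ) / k) := by
          gcongr
          · exact Real.one_le_exp zero_le_one
          · exact Real.one_le_rpow hD (by positivity)
  · obtain ⟨M, hMB, hM⟩ := exists_subset_card_eq hle
    obtain ⟨p, hpM, U, hU, -⟩ := h M hMB hM
    refine (isTuranSystem_rootedEdges h).card_le_mul_rpow hk (hD₂ p (hMB hpM) ⟨U, hU⟩) ?_
    calc (#(rootedEdges B E k) : ℝ) ≤ ∑ p ∈ B, (#(E p) : ℝ) :=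
          mod_cast card_rootedEdges_le_sum B E k
      _ ≤ ∑ _p ∈ B, D := sum_le_sum hE
      _ = D * #B := by rw [sum_const, nsmul_eq_mul, mul_comm]

end RootedEdges

end Turan

section LeaveOut

open Finset

variable {C : Set (X → ℤ)} {f : Finset (X × ℤ) → Set (X → ℤ) → ℝ} {k m T : ℕ} {c α : ℝ}
  {h : X → ℤ} {x : X} {y : ℤ}

theorem Consistent.mono {S S' : Set (X × ℤ)} (h_cons : Consistent h S') (hS : S ⊆ S') :
    Consistent h S := fun p hp ↦ h_cons p (hS hp)

theorem consistent_insert {S : Set (X × ℤ)} :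
    Consistent h (insert (x, y) S) ↔ h x = y ∧ Consistent h S :=
  Set.forall_mem_insert

theorem vSpace_insert (C : Set (X → ℤ)) (S : Set (X × ℤ)) (x : X) (y : ℤ) :
    VSpace C (insert (x, y) S) = Restrict (VSpace C S) x y := by
  ext g
  change g ∈ C ∧ Consistent g (insert (x, y) S) ↔ (g ∈ C ∧ Consistent g S) ∧ g x = y
  rw [consistent_insert, and_comm (a := g x = y), and_assoc]

variable [DecidableEq X] {A U : Finset (X × ℤ)}

/-- The amount by which the summand of `U` in the leave-`k`-out potential of `A` decreases when
`(x, y)` is added to `A`. -/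
def scoreDrop (C : Set (X → ℤ)) (f : Finset (X × ℤ) → Set (X → ℤ) → ℝ) (A : Finset (X × ℤ))
    (x : X) (y : ℤ) (U : Finset (X × ℤ)) : ℝ :=
  f U (VSpace C ↑(A \ U)) - f U (Restrict (VSpace C ↑(A \ U)) x y)

theorem scoreDrop_nonneg (hf : MonotoneScore C k f) (hxy : RealizableIn (VSpace C ↑A) x y)
    (hU : U ∈ A.powersetCard k) : 0 ≤ scoreDrop C f A x y U := by
  obtain ⟨hUA, hcard⟩ := mem_powersetCard.1 hU
  obtain ⟨g, ⟨hgC, hgA⟩, hgx⟩ := hxy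
  have hgU : Consistent g ↑U := hgA.mono (mod_cast hUA)
  have hgV : g ∈ VSpace C ↑(A \ U) := ⟨hgC, hgA.mono (mod_cast sdiff_subset)⟩
  exact sub_nonneg.2 <| hf U hcard _ ⟨_, rfl⟩ ⟨g, hgV, hgU⟩ x y
    ⟨g, hgV, consistent_insert.2 ⟨hgx, hgU⟩⟩

theorem pot_insert_le (hc : 0 ≤ c) (hf : ∀ U : Finset (X × ℤ), #U = k + 1 → ∀ V, f U V ≤ c)
    (hA : (x, y) ∉ A) :
    pot C (k + 1) f (insert (x, y) A) ≤
      ∑ U ∈ A.powersetCard (k + 1), f U (Restrict (VSpace C ↑(A \ U)) x y) +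
        c * (#A).choose k := by
  have hdisj : Disjoint (A.powersetCard (k + 1)) ((A.powersetCard k).image (insert (x, y))) := by
    refine disjoint_left.2 fun U hU hU' ↦ ?_
    obtain ⟨U', -, rfl⟩ := mem_image.1 hU'
    exact hA ((mem_powersetCard.1 hU).1 (mem_insert_self _ _))
  have old_summands : ∀ U ∈ A.powersetCard (k + 1), f U (VSpace C ↑(insert (x, y) A \ U)) =
      f U (Restrict (VSpace C ↑(A \ U)) x y) := fun U hU ↦ by
    rw [insert_sdiff_of_notMem _ fun hxy ↦ hA ((mem_powersetCard.1 hU).1 hxy), coe_insert,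
      vSpace_insert]
  have new_summands : ∀ U ∈ (A.powersetCard k).image (insert (x, y)),
      f U (VSpace C ↑(insert (x, y) A \ U)) ≤ c := fun U hU ↦ by
    obtain ⟨U', hU', rfl⟩ := mem_image.1 hU
    obtain ⟨hUA, hcard⟩ := mem_powersetCard.1 hU'
    exact hf _ (by rw [card_insert_of_notMem fun hxy ↦ hA (hUA hxy), hcard]) _
  have card_new : #((A.powersetCard k).image (insert (x, y))) ≤ (#A).choose k :=
    card_image_le.trans_eq (card_powersetCard k A)
  unfold pot
  rw [powersetCard_succ_insert hA, sum_union hdisj, sum_congr rfl old_summands]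
  gcongr
  calc ∑ U ∈ (A.powersetCard k).image (insert (x, y)), f U (VSpace C ↑(insert (x, y) A \ U))
      ≤ #((A.powersetCard k).image (insert (x, y))) * c := by
        simpa using sum_le_card_nsmul _ _ c new_summands
    _ ≤ c * (#A).choose k := by
        rw [mul_comm]
        gcongr

theorem sum_scoreDrop_le (hc : 0 ≤ c) (hf : ∀ U : Finset (X × ℤ), #U = k + 1 → ∀ V, f U V ≤ c)
    (hA : (x, y) ∉ A) :
    ∑ U ∈ A.powersetCard (k + 1), scoreDrop C f A x y U ≤
      pot C (k + 1) f A - pot C (k + 1) f (insert (x, y) A) + c * (#A).choose k := by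
  have hpot := pot_insert_le (C := C) hc hf hA
  simp only [scoreDrop, sum_sub_distrib]
  unfold pot at hpot ⊢
  linarith

/-- The `k`-subsets of `A` whose summand in the leave-`k`-out potential decreases by at least `1`
when `(x, y)` is added to `A`. -/
noncomputable def droppedSets (C : Set (X → ℤ)) (k : ℕ) (f : Finset (X × ℤ) → Set (X → ℤ) → ℝ)
    (A : Finset (X × ℤ)) (x : X) (y : ℤ) : Finset (Finset (X × ℤ)) :=
  {U ∈ A.powersetCard k | 1 ≤ scoreDrop C f A x y U}

theorem card_droppedSets_le (hc : 0 ≤ c)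
    (hf : ∀ U : Finset (X × ℤ), #U = k + 1 → ∀ V, f U V ≤ c) (hmono : MonotoneScore C (k + 1) f)
    (hA : (x, y) ∉ A) (hxy : RealizableIn (VSpace C ↑A) x y) :
    #(droppedSets C (k + 1) f A x y) ≤
      pot C (k + 1) f A - pot C (k + 1) f (insert (x, y) A) + c * (#A).choose k := by
  calc (#(droppedSets C (k + 1) f A x y) : ℝ)
      = ∑ U ∈ droppedSets C (k + 1) f A x y, 1 := by simp
    _ ≤ ∑ U ∈ droppedSets C (k + 1) f A x y, scoreDrop C f A x y U :=
        sum_le_sum fun U hU ↦ (mem_filter.1 hU).2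
    _ ≤ ∑ U ∈ A.powersetCard (k + 1), scoreDrop C f A x y U :=
        sum_le_sum_of_subset_of_nonneg (filter_subset _ _)
          fun U hU _ ↦ scoreDrop_nonneg hmono hxy hU
    _ ≤ _ := sum_scoreDrop_le hc hf hA

theorem one_le_mul_choose_of_mem_droppedSets
    (hf : ∀ U : Finset (X × ℤ), #U = k + 1 → ∀ V, 0 ≤ f U V ∧ f U V ≤ c)
    (hU : U ∈ droppedSets C (k + 1) f A x y) : 1 ≤ c * (#A).choose k := by
  obtain ⟨hUA, hdrop⟩ := mem_filter.1 hU
  obtain ⟨hsub, hcard⟩ := mem_powersetCard.1 hUA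
  have one_le_c : 1 ≤ c := hdrop.trans <|
    (sub_le_self _ (hf U hcard _).1).trans (hf U hcard _).2
  have hk : k ≤ #A := k.le_succ.trans (hcard.symm.le.trans (card_le_card hsub))
  exact one_le_mul_of_one_le_of_one_le one_le_c (mod_cast Nat.choose_pos hk)

theorem exists_mem_droppedSets (hf : RobustScore C m k f) (hh : h ∈ C) {M : Finset (X × ℤ)}
    (hM : #M = m) (hcons : Consistent h ↑M) {A : X × ℤ → Finset (X × ℤ)}
    (hA : ∀ p ∈ M, Consistent h ↑(A p)) (hMA : ∀ p ∈ M, M.erase p ⊆ A p)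
    (hflip : ∀ p ∈ M, RealizableIn (VSpace C ↑(A p)) p.1 (-p.2)) :
    ∃ p ∈ M, ∃ U ∈ droppedSets C k f (A p) p.1 (-p.2), #U = k ∧ U ⊆ M.erase p := by
  obtain ⟨U, hUM, hcard, p, hp, hpU, hrobust⟩ := hf h hh M hM hcons
  have hUp : U ⊆ M.erase p := subset_erase.2 ⟨hUM, hpU⟩
  have hUA : U ⊆ A p := hUp.trans (hMA p hp)
  have hrest : M \ insert p U ⊆ A p \ U := by
    rw [sdiff_insert, ← erase_sdiff_comm]
    exact sdiff_subset_sdiff (hMA p hp) subset_rfl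
  refine ⟨p, hp, U, mem_filter.2 ⟨mem_powersetCard.2 ⟨hUA, hcard⟩, ?_⟩, hcard, hUp⟩
  refine (hrobust ↑(A p \ U) ((hA p hp).mono (mod_cast sdiff_subset))
    (mod_cast hrest)).resolve_right ?_
  obtain ⟨g, ⟨hgC, hgA⟩, hgp⟩ := hflip p hp
  exact not_not.2 ⟨g, ⟨⟨hgC, hgA.mono (mod_cast sdiff_subset)⟩, hgp⟩, hgA.mono (mod_cast hUA)⟩

/-- The attackable examples of `S`: those that a learner may mislabel on some extension `A` of the
rest of `S`, by at most `T` examples in total, at the cost of a potential drop below `α`. -/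
def attackable (C : Set (X → ℤ)) (k : ℕ) (f : Finset (X × ℤ) → Set (X → ℤ) → ℝ) (T : ℕ) (α : ℝ)
    (h : X → ℤ) (S : Finset (X × ℤ)) : Set (X × ℤ) :=
  {p | p ∈ S ∧ ∃ A : Finset (X × ℤ), Consistent h ↑A ∧
    ↑(S.erase p) ⊆ (↑A : Set (X × ℤ)) ∧ #A ≤ T ∧
    RealizableIn (VSpace C ↑A) p.1 1 ∧ RealizableIn (VSpace C ↑A) p.1 (-1) ∧
    pot C k f A - pot C k f (insert (p.1, -p.2) A) < α}

theorem exists_extension_of_mem_attackable (hc : 0 ≤ c) (hα : 1 ≤ α) (hf : IsGood C m c (k + 1) f)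
    (hlabel : ∀ x, h x = 1 ∨ h x = -1) {S : Finset (X × ℤ)} (hcons : Consistent h ↑S)
    {p : X × ℤ} (hp : p ∈ attackable C (k + 1) f T α h S) :
    ∃ A : Finset (X × ℤ), Consistent h ↑A ∧ S.erase p ⊆ A ∧
      RealizableIn (VSpace C ↑A) p.1 (-p.2) ∧
      #(droppedSets C (k + 1) f A p.1 (-p.2)) ≤ α + c * T.choose k ∧
      ((droppedSets C (k + 1) f A p.1 (-p.2)).Nonempty → 2 ≤ α + c * T.choose k) := by
  obtain ⟨hpS, A, hA, hSA, hAT, hpos, hneg, hdrop⟩ := hp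
  have hlabel_p : p.2 = 1 ∨ p.2 = -1 := hcons p hpS ▸ hlabel p.1
  have hflip : RealizableIn (VSpace C ↑A) p.1 (-p.2) := by
    rcases hlabel_p with hp | hp <;> rw [hp]
    exacts [hneg, (neg_neg (1 : ℤ)).symm ▸ hpos]
  have hnotMem : (p.1, -p.2) ∉ A := fun hmem ↦ by
    have hflipped : h p.1 = -p.2 := hA (p.1, -p.2) hmem
    have htrue : h p.1 = p.2 := hcons p hpS
    omega
  have hchoose : c * (#A).choose k ≤ c * T.choose k := by gcongr
  refine ⟨A, hA, mod_cast hSA, hflip, ?_, fun ⟨U, hU⟩ ↦ ?_⟩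
  · have := card_droppedSets_le hc (fun U hU V ↦ (hf.1 U hU V).2) hf.2.1 hnotMem hflip
    linarith
  · have := one_le_mul_choose_of_mem_droppedSets hf.1 hU
    linarith

end LeaveOut

theorem stmt5_general {X : Type*} [DecidableEq X] (C : Set (X → ℤ)) (m k : ℕ) (hk : 1 ≤ k)
    (c α : ℝ) (hc : 0 ≤ c) (hα : 1 ≤ α) (T : ℕ) (f : Finset (X × ℤ) → Set (X → ℤ) → ℝ)
    (hf : IsGood C m c k f) (h : X → ℤ) (hh : h ∈ C) (hlabel : ∀ x, h x = 1 ∨ h x = -1)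
    (S : Finset (X × ℤ)) (hcons : Consistent h ↑S) :
    ((attackable C k f T α h S).ncard : ℝ) ≤
      Real.exp 1 * m * (α + c * T.choose (k - 1)) ^ ((1 : ℝ) / k) := by
  obtain ⟨B, hB⟩ : ∃ B : Finset (X × ℤ), ↑B = attackable C k f T α h S :=
    (S.finite_toSet.subset fun p hp ↦ hp.1).exists_finset_coe
  have hBS : B ⊆ S := fun p hp ↦ (hB ▸ Finset.mem_coe.2 hp : p ∈ attackable C k f T α h S).1
  obtain ⟨k, rfl⟩ := Nat.exists_eq_add_of_le' hk
  have hext := fun p (hp : p ∈ B) ↦ exists_extension_of_mem_attackable hc hα hf hlabel hcons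
    (hB ▸ Finset.mem_coe.2 hp)
  choose! A hA hSA hflip hcard htwo using hext
  rw [← hB, Set.ncard_coe_finset]
  refine card_le_mul_rpow_of_rooted hk (le_add_of_le_of_nonneg hα (by positivity)) hcard htwo ?_
  intro M hMB hM
  exact exists_mem_droppedSets hf.2.2 hh hM (hcons.mono (mod_cast hMB.trans hBS))
    (fun p hp ↦ hA p (hMB hp))
    (fun p hp ↦ (Finset.erase_subset_erase p (hMB.trans hBS)).trans (hSA p (hMB hp)))
    (fun p hp ↦ hflip p (hMB hp))

/-- Bound on the number of attackable samples: if `f` is `(m,c,k)`-good, `h ∈ C`, and `S`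
is a set of labeled examples labeled by `h` with `|S| ≤ T`, then the number of
`(x,y) ∈ S` that are attackable — i.e. for which some truthfully labeled extension
`A ⊇ S ∖ {(x,y)}` with `|A| ≤ T` has both labels of `x` realizable in `𝒱(A)` and a
potential drop `ρ_f(A) − ρ_f(A ∪ {(x,−y)}) < α` — is at most
`e · m · (α + c · C(T, k−1))^{1/k}`. -/
theorem stmt5 {X : Type*} [DecidableEq X] (C : Set (X → ℤ))
    (hC : ∀ h ∈ C, ∀ x : X, h x = 1 ∨ h x = -1)
    (m k : ℕ) (hk : 1 ≤ k) (hm : k + 1 ≤ m)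
    (c α : ℝ) (hc : 0 < c) (hα : 1 ≤ α)
    (T : ℕ) (hT : 1 ≤ T)
    (f : Finset (X × ℤ) → Set (X → ℤ) → ℝ)
    (hf : IsGood C m c k f)
    (h : X → ℤ) (hh : h ∈ C)
    (S : Finset (X × ℤ)) (hcons : Consistent h ↑S) (hScard : S.card ≤ T) :
    (({p : X × ℤ | p ∈ S ∧ ∃ A : Finset (X × ℤ), Consistent h ↑A ∧
        ↑(S.erase p) ⊆ (↑A : Set (X × ℤ)) ∧ A.card ≤ T ∧
        RealizableIn (VSpace C ↑A) p.1 1 ∧ RealizableIn (VSpace C ↑A) p.1 (-1) ∧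
        pot C k f A - pot C k f (insert (p.1, -p.2) A) < α}.ncard : ℝ)) ≤
      Real.exp 1 * m * (α + c * (T.choose (k - 1))) ^ ((1 : ℝ) / k) :=
  stmt5_general C m k hk c α hc.le hα T f hf h hh (hC h hh) S hcons
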